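/- Let M be a finite matroid that has at least one circuit, and suppose that every circuit of M has size at most ℓ. Then M has a depth-decomposition of depth at most ℓ²; that is, the branch-depth of M is at most ℓ². -/

import Mathlib

/-!
Common definitions: rooted trees (encoded by a parent function), their depth,
depth-decompositions of matroids, matroid rank, circuits, contraction,
connectivity and components.
-/

/-- `u` is an ancestor of `v` (or equal to it) in the rooted tree encoded by `parent`. -/
def Anc {V : Type} (parent : V → V) (u v : V) : Prop := ∃ n : ℕ, parent^[n] v = u

/-- `(root, parent)` encodes a rooted tree: the root is its own parent and every
vertex reaches the root by iterating `parent` (each non-root vertex is joined to its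
parent by an edge). -/
def IsRootedTree {V : Type} (root : V) (parent : V → V) : Prop :=
  parent root = root ∧ ∀ v : V, ∃ n : ℕ, parent^[n] v = root

/-- The depth of a vertex in a rooted tree: the number of edges on the path from the
root to the vertex. -/
noncomputable def vdepth {V : Type} (root : V) (parent : V → V) (v : V) : ℕ :=
  sInf {n : ℕ | parent^[n] v = root}

/-- The depth of a rooted tree: the maximum number of edges on a path from the root
to a leaf, i.e. the maximal depth of a vertex. -/
noncomputable def treeDepth {V : Type} (root : V) (parent : V → V) : ℕ :=
  sSup (Set.range (vdepth root parent))

/-- A leaf of a rooted tree: a vertex that is the parent of no other vertex. -/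
def IsLeaf {V : Type} (parent : V → V) (v : V) : Prop := ∀ u : V, u ≠ v → parent u ≠ v

/-- The rank of a set `X` in a matroid `M`: the largest size of an independent subset
of `X`. -/
noncomputable def mrank {α : Type} (M : Matroid α) (X : Set α) : ℕ :=
  sSup {n : ℕ | ∃ I : Set α, I ⊆ X ∧ M.Indep I ∧ I.ncard = n}

/-- `(root, parent, f)` is a depth-decomposition of the matroid `M`: the tree is finite,
the rank of `M` equals the number of edges of the tree (one edge per non-root vertex),
and the rank of any `X ⊆ M.E` is at most the number of edges of the union `T*(X)` of
the paths from the root to the vertices of `f(X)` (one edge per non-root vertex that is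
an ancestor of, or equal to, some vertex of `f(X)`). -/
def IsDepthDecomp {α V : Type} (M : Matroid α) (root : V) (parent : V → V)
    (f : α → V) : Prop :=
  Finite V ∧ IsRootedTree root parent ∧
  mrank M M.E = Set.ncard {v : V | v ≠ root} ∧
  ∀ X : Set α, X ⊆ M.E →
    mrank M X ≤ Set.ncard {v : V | v ≠ root ∧ ∃ e ∈ X, Anc parent v (f e)}

/-- `M` has a depth-decomposition of depth at most `d`. -/
def HasDepthDecompOfDepthLE {α : Type} (M : Matroid α) (d : ℕ) : Prop :=
  ∃ (V : Type) (root : V) (parent : V → V) (f : α → V),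
    IsDepthDecomp M root parent f ∧ treeDepth root parent ≤ d

/-- The branch-depth of a matroid: the smallest depth of a depth-decomposition. -/
noncomputable def branchDepth {α : Type} (M : Matroid α) : ℕ :=
  sInf {d : ℕ | HasDepthDecompOfDepthLE M d}

/-- A circuit of a matroid: a minimal dependent set. -/
def IsCircuitOf {α : Type} (M : Matroid α) (C : Set α) : Prop :=
  M.Dep C ∧ ∀ D : Set α, M.Dep D → D ⊆ C → D = C

/-- `N` is the contraction `M / F` of the matroid `M` by the set `F`: the ground set of
`N` is `M.E \ F`, and a set `I` disjoint from `F` is independent in `N` if and only if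
`r(F ∪ I) = r(F) + |I|`. -/
def IsContractionBy {α : Type} (M : Matroid α) (F : Set α) (N : Matroid α) : Prop :=
  N.E = M.E \ F ∧
  ∀ I : Set α, N.Indep I ↔
    I ⊆ M.E \ F ∧ I.Finite ∧ mrank M (F ∪ I) = mrank M F + I.ncard

/-- A matroid is connected if its ground set is nonempty and any two distinct elements
lie in a common circuit. -/
def IsConnectedM {α : Type} (M : Matroid α) : Prop :=
  M.E.Nonempty ∧
  ∀ x ∈ M.E, ∀ y ∈ M.E, x = y ∨ ∃ C : Set α, IsCircuitOf M C ∧ x ∈ C ∧ y ∈ C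

/-- A component of a matroid: an equivalence class of the relation "equal or lying in a
common circuit" on the ground set. -/
def IsComponentOf {α : Type} (M : Matroid α) (K : Set α) : Prop :=
  ∃ x ∈ M.E,
    K = {y ∈ M.E | x = y ∨ ∃ C : Set α, IsCircuitOf M C ∧ x ∈ C ∧ y ∈ C}

/-!
Decompositions of the components of a matroid are glued at the root, and contracting one element
costs at most one level, so it is enough to reduce a connected matroid `M`. Let `C` be a largest
circuit of `M`. Every circuit `D` of `M ／ C` is smaller than `C`. Otherwise `D` would also be a
circuit of `M`, with no circuits other than `C` and `D` inside `C ∪ D`. Contracting and eliminating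
elements of a circuit that meets both `C` and `D` leads to a circuit `Z` meeting both with exactly
one element `x` outside `C ∪ D`. Choose `c ∈ Z ∩ C` and `d ∈ Z ∩ D`, and let `Z'` be a circuit
through `x` in `C ∪ D ∪ {x}` that avoids `c` and `d`. Eliminating `x` from `Z` and `Z'` while
keeping `c` (or `d`) gives `C` (or `D`), so `C ∪ D ⊆ Z ∪ Z'`. As `x ∈ Z ∩ Z'`, this forces
`|Z| + |Z'| > |C| + |D|`, contradicting the maximality of `C`. Hence the contraction of `C` lowers
the bound `ℓ` at a cost of at most `ℓ` levels, and `(ℓ - 1)² + ℓ ≤ ℓ²`.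
-/

section BranchDepth

open Set
open scoped Matroid

section Rank

lemma eRk_contract_add_eRk {α : Type*} (M : Matroid α) (C X : Set α) :
    (M ／ C).eRk X + M.eRk C = M.eRk (X ∪ C) := by
  obtain ⟨I, hI⟩ := M.exists_isBasis' C
  obtain ⟨J, hJ, hIJ⟩ := hI.indep.subset_isBasis'_of_subset (hI.subset.trans subset_union_right)
  have hJC : J ∩ C = I :=
    (hI.eq_of_subset_indep (hJ.indep.inter_right C) (subset_inter hIJ hI.subset)
      inter_subset_right).symm
  have hJI : J \ C ∪ I = J := by rw [← hJC, sdiff_union_inter]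
  have hbasis : (M ／ C).IsBasis' (J \ C) ((X ∪ C) \ C) :=
    hJ.contract_isBasis' hI (by simpa only [hJI] using hJ.indep)
  have hX : (X ∪ C) \ C ∩ (M ／ C).E = X ∩ (M ／ C).E := by
    rw [Matroid.contract_ground, union_sdiff_right]
    tauto_set
  rw [← Matroid.eRk_inter_ground _ X, ← hX, Matroid.eRk_inter_ground, ← hbasis.encard_eq_eRk,
    ← hI.encard_eq_eRk, ← hJ.encard_eq_eRk, ← hJC, encard_sdiff_add_encard_inter]

variable {α : Type} {M : Matroid α} {C X Y : Set α}

lemma isCircuitOf_iff : IsCircuitOf M C ↔ M.IsCircuit C := by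
  simp only [IsCircuitOf, Matroid.isCircuit_iff]

variable [M.RankFinite]

lemma cast_mrank (M : Matroid α) [M.RankFinite] (X : Set α) : (mrank M X : ℕ∞) = M.eRk X := by
  obtain ⟨B, hB⟩ := M.exists_isBasis' X
  have hmax : IsGreatest {n | ∃ I ⊆ X, M.Indep I ∧ I.ncard = n} B.ncard := by
    refine ⟨⟨B, hB.subset, hB.indep, rfl⟩, ?_⟩
    rintro _ ⟨I, hIX, hI, rfl⟩
    rw [← Nat.cast_le (α := ℕ∞), hI.finite.cast_ncard_eq, hB.indep.finite.cast_ncard_eq,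
      hB.encard_eq_eRk]
    exact hI.encard_le_eRk_of_subset hIX
  rw [mrank, hmax.csSup_eq, hB.indep.finite.cast_ncard_eq, hB.encard_eq_eRk]

lemma mrank_mono (hXY : X ⊆ Y) : mrank M X ≤ mrank M Y := by
  rw [← Nat.cast_le (α := ℕ∞), cast_mrank, cast_mrank]
  exact M.eRk_mono hXY

lemma mrank_union_le (M : Matroid α) [M.RankFinite] (X Y : Set α) :
    mrank M (X ∪ Y) ≤ mrank M X + mrank M Y := by
  rw [← Nat.cast_le (α := ℕ∞), Nat.cast_add, cast_mrank, cast_mrank, cast_mrank]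
  exact M.eRk_union_le_eRk_add_eRk X Y

lemma mrank_contract_add_mrank (M : Matroid α) [M.RankFinite] (C X : Set α) :
    mrank (M ／ C) X + mrank M C = mrank M (X ∪ C) := by
  rw [← Nat.cast_inj (R := ℕ∞), Nat.cast_add, cast_mrank, cast_mrank, cast_mrank]
  exact eRk_contract_add_eRk M C X

lemma mrank_contract_ground_add_mrank (M : Matroid α) [M.RankFinite] (C : Set α) :
    mrank (M ／ C) (M ／ C).E + mrank M C = mrank M M.E := by
  rw [mrank_contract_add_mrank, Matroid.contract_ground, sdiff_union_self,
    ← Nat.cast_inj (R := ℕ∞), cast_mrank, cast_mrank, Matroid.eRk_ground_union, Matroid.eRk_ground]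

lemma mrank_le_mrank_contract_sdiff_add_mrank (M : Matroid α) [M.RankFinite] (C X : Set α) :
    mrank M X ≤ mrank (M ／ C) (X \ C) + mrank M C := by
  rw [mrank_contract_add_mrank, sdiff_union_self]
  exact mrank_mono subset_union_left

lemma mrank_restrict (M : Matroid α) [M.RankFinite] {R : Set α} (hXR : X ⊆ R) :
    mrank (M ↾ R) X = mrank M X := by
  rw [← Nat.cast_inj (R := ℕ∞), cast_mrank, cast_mrank, M.restrict_eRk_eq hXR]

lemma mrank_eq_ncard_of_isBasis {I : Set α} (hI : M.IsBasis I X) : mrank M X = I.ncard := by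
  rw [← Nat.cast_inj (R := ℕ∞), cast_mrank, hI.indep.finite.cast_ncard_eq, hI.encard_eq_eRk]

lemma mrank_empty (M : Matroid α) [M.RankFinite] : mrank M ∅ = 0 := by
  rw [← Nat.cast_inj (R := ℕ∞), cast_mrank, M.eRk_empty, Nat.cast_zero]

lemma mrank_singleton_le_one (M : Matroid α) [M.RankFinite] (e : α) : mrank M {e} ≤ 1 := by
  rw [← Nat.cast_le (α := ℕ∞), cast_mrank, Nat.cast_one]
  exact M.eRk_singleton_le e

lemma mrank_pos_of_isNonloop {e : α} (he : M.IsNonloop e) (heX : e ∈ X) : 0 < mrank M X := by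
  have hle : M.eRk {e} ≤ M.eRk X := M.eRk_mono (singleton_subset_iff.2 heX)
  rw [he.eRk_eq, ← cast_mrank] at hle
  exact_mod_cast hle

end Rank

section Trees

variable {V V₁ V₂ : Type}

lemma IsRootedTree.treeDepth_le_iff [Finite V] {root : V} {parent : V → V} {d : ℕ}
    (h : IsRootedTree root parent) :
    treeDepth root parent ≤ d ↔ ∀ v, parent^[d] v = root := by
  have hne : (range (vdepth root parent)).Nonempty := ⟨_, mem_range_self root⟩
  rw [treeDepth, csSup_le_iff (finite_range _).bddAbove hne, forall_mem_range]
  refine forall_congr' fun v ↦ ⟨fun hv ↦ ?_, fun hv ↦ Nat.sInf_le hv⟩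
  have hroot : parent^[vdepth root parent v] v = root := Nat.sInf_mem (h.2 v)
  rw [← Nat.sub_add_cancel hv, Function.iterate_add_apply, hroot, Function.iterate_fixed h.1]

/-- The edges of the union of the paths from the root to the vertices `f e` with `e ∈ X`, each
represented by its lower endpoint. -/
def pathEdges {α : Type} (root : V) (parent : V → V) (f : α → V) (X : Set α) : Set V :=
  {v | v ≠ root ∧ ∃ e ∈ X, Anc parent v (f e)}

lemma pathEdges_mono {α : Type} (root : V) (parent : V → V) (f : α → V) {X Y : Set α}
    (hXY : X ⊆ Y) : pathEdges root parent f X ⊆ pathEdges root parent f Y :=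
  fun _ hv ↦ ⟨hv.1, hv.2.imp fun _ he ↦ ⟨hXY he.1, he.2⟩⟩

/-- The parent function of the tree obtained from a rooted tree by attaching a new root `none`
above the old one. -/
noncomputable def addRoot (root : V) (parent : V → V) : Option V → Option V
  | none => none
  | some v => open Classical in if v = root then none else some (parent v)

section AddRoot

variable {root : V} {parent : V → V} {u v : V} {n : ℕ}

lemma addRoot_iterate_succ (h : parent^[n] v = root) :
    (addRoot root parent)^[n + 1] (some v) = none := by
  induction n generalizing v with
  | zero => simp_all [addRoot]
  | succ n ih =>
    rw [Function.iterate_succ_apply, addRoot]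
    split_ifs
    · exact Function.iterate_fixed rfl _
    · exact ih h

lemma IsRootedTree.addRoot (h : IsRootedTree root parent) :
    IsRootedTree none (addRoot root parent) := by
  refine ⟨rfl, fun v ↦ ?_⟩
  cases v with
  | none => exact ⟨0, rfl⟩
  | some v =>
    obtain ⟨n, hn⟩ := h.2 v
    exact ⟨n + 1, addRoot_iterate_succ hn⟩

lemma anc_addRoot_some (hroot : parent root = root) (h : Anc parent u v) :
    Anc (addRoot root parent) (some u) (some v) := by
  obtain ⟨n, rfl⟩ := h
  induction n generalizing v with
  | zero => exact ⟨0, rfl⟩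
  | succ n ih =>
    by_cases hv : v = root
    · refine ⟨0, ?_⟩
      rw [hv, Function.iterate_fixed hroot]
      rfl
    · obtain ⟨m, hm⟩ := ih (v := parent v)
      refine ⟨m + 1, ?_⟩
      rw [Function.iterate_succ_apply, addRoot, if_neg hv, hm]
      rfl

lemma ncard_setOf_ne_none [Finite V] (root : V) :
    {v : Option V | v ≠ none}.ncard = {v | v ≠ root}.ncard + 1 := by
  have hsome : {v : Option V | v ≠ none} = some '' insert root {v | v ≠ root} := by
    ext (- | v)
    · simp
    · simpa using em (v = root)
  rw [hsome, ncard_image_of_injective _ (Option.some_injective V),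
    ncard_insert_of_notMem fun h : root ≠ root ↦ h rfl]

lemma ncard_pathEdges_add_one_le_addRoot [Finite V] {α : Type} (h : IsRootedTree root parent)
    (f : α → V) {X : Set α} (hX : X.Nonempty) :
    (pathEdges root parent f X).ncard + 1 ≤
      (pathEdges none (addRoot root parent) (some ∘ f) X).ncard := by
  have hsub : some '' insert root (pathEdges root parent f X) ⊆
      pathEdges none (addRoot root parent) (some ∘ f) X := by
    rw [image_subset_iff, insert_subset_iff]
    obtain ⟨a, ha⟩ := hX
    refine ⟨⟨Option.some_ne_none root, a, ha, anc_addRoot_some h.1 (h.2 (f a))⟩, ?_⟩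
    rintro v ⟨-, e, he, hve⟩
    exact ⟨Option.some_ne_none v, e, he, anc_addRoot_some h.1 hve⟩
  calc (pathEdges root parent f X).ncard + 1
      = (insert root (pathEdges root parent f X)).ncard :=
        (ncard_insert_of_notMem fun hroot ↦ hroot.1 rfl).symm
    _ = (some '' insert root (pathEdges root parent f X)).ncard :=
        (ncard_image_of_injective _ (Option.some_injective V)).symm
    _ ≤ (pathEdges none (addRoot root parent) (some ∘ f) X).ncard := ncard_le_ncard hsub

end AddRoot

/-- The vertices of the wedge of two rooted trees, which glues them along their roots. The vertex
`v` of the first tree is encoded as `(v, o₂)` and the vertex `w` of the second as `(o₁, w)`. -/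
abbrev Wedge (o₁ : V₁) (o₂ : V₂) : Type := {q : V₁ × V₂ // q.1 = o₁ ∨ q.2 = o₂}

namespace Wedge

variable {o₁ : V₁} {o₂ : V₂} {p₁ : V₁ → V₁} {p₂ : V₂ → V₂}

/-- The vertex of the wedge corresponding to a vertex of the first tree. -/
def inl (o₁ : V₁) (o₂ : V₂) (v : V₁) : Wedge o₁ o₂ := ⟨(v, o₂), .inr rfl⟩

/-- The vertex of the wedge corresponding to a vertex of the second tree. -/
def inr (o₁ : V₁) (o₂ : V₂) (v : V₂) : Wedge o₁ o₂ := ⟨(o₁, v), .inl rfl⟩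

/-- The root of the wedge of two rooted trees. -/
def root (o₁ : V₁) (o₂ : V₂) : Wedge o₁ o₂ := ⟨(o₁, o₂), .inl rfl⟩

/-- The parent function of the wedge of two rooted trees, which acts coordinatewise. -/
def parent (h₁ : p₁ o₁ = o₁) (h₂ : p₂ o₂ = o₂) (q : Wedge o₁ o₂) : Wedge o₁ o₂ :=
  ⟨(p₁ q.1.1, p₂ q.1.2),
    q.2.imp (fun h ↦ (congrArg p₁ h).trans h₁) fun h ↦ (congrArg p₂ h).trans h₂⟩

lemma coe_parent_iterate (h₁ : p₁ o₁ = o₁) (h₂ : p₂ o₂ = o₂) (n : ℕ) (q : Wedge o₁ o₂) :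
    ((parent h₁ h₂)^[n] q : V₁ × V₂) = (p₁^[n] q.1.1, p₂^[n] q.1.2) := by
  induction n generalizing q with
  | zero => rfl
  | succ _ ih => exact ih (parent h₁ h₂ q)

lemma parent_iterate_eq_root_iff (h₁ : p₁ o₁ = o₁) (h₂ : p₂ o₂ = o₂) {n : ℕ}
    {q : Wedge o₁ o₂} :
    (parent h₁ h₂)^[n] q = root o₁ o₂ ↔ p₁^[n] q.1.1 = o₁ ∧ p₂^[n] q.1.2 = o₂ := by
  rw [Subtype.ext_iff, coe_parent_iterate, root, Prod.mk_inj]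

lemma isRootedTree (h₁ : IsRootedTree o₁ p₁) (h₂ : IsRootedTree o₂ p₂) :
    IsRootedTree (root o₁ o₂) (parent h₁.1 h₂.1) := by
  refine ⟨(parent_iterate_eq_root_iff (n := 1) h₁.1 h₂.1).2 ⟨h₁.1, h₂.1⟩, fun q ↦ ?_⟩
  obtain ⟨n₁, hn₁⟩ := h₁.2 q.1.1
  obtain ⟨n₂, hn₂⟩ := h₂.2 q.1.2
  refine ⟨n₁ + n₂, (parent_iterate_eq_root_iff h₁.1 h₂.1).2 ⟨?_, ?_⟩⟩
  · rw [Nat.add_comm, Function.iterate_add_apply, hn₁, Function.iterate_fixed h₁.1]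
  · rw [Function.iterate_add_apply, hn₂, Function.iterate_fixed h₂.1]

lemma anc_inl (h₁ : p₁ o₁ = o₁) (h₂ : p₂ o₂ = o₂) {u v : V₁} (h : Anc p₁ u v) :
    Anc (parent h₁ h₂) (inl o₁ o₂ u) (inl o₁ o₂ v) := by
  obtain ⟨n, rfl⟩ := h
  refine ⟨n, Subtype.ext ?_⟩
  simp only [coe_parent_iterate, inl, Function.iterate_fixed h₂]

lemma anc_inr (h₁ : p₁ o₁ = o₁) (h₂ : p₂ o₂ = o₂) {u v : V₂} (h : Anc p₂ u v) :
    Anc (parent h₁ h₂) (inr o₁ o₂ u) (inr o₁ o₂ v) := by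
  obtain ⟨n, rfl⟩ := h
  refine ⟨n, Subtype.ext ?_⟩
  simp only [coe_parent_iterate, inr, Function.iterate_fixed h₁]

lemma inl_injective : Function.Injective (inl o₁ o₂) := fun _ _ h ↦
  congrArg (fun q : Wedge o₁ o₂ ↦ q.1.1) h

lemma inr_injective : Function.Injective (inr o₁ o₂) := fun _ _ h ↦
  congrArg (fun q : Wedge o₁ o₂ ↦ q.1.2) h

lemma inl_eq_root_iff {v : V₁} : inl o₁ o₂ v = root o₁ o₂ ↔ v = o₁ := by
  simp [inl, root]

lemma inr_eq_root_iff {v : V₂} : inr o₁ o₂ v = root o₁ o₂ ↔ v = o₂ := by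
  simp [inr, root]

lemma setOf_ne_root :
    {q | q ≠ root o₁ o₂} = inl o₁ o₂ '' {v | v ≠ o₁} ∪ inr o₁ o₂ '' {v | v ≠ o₂} := by
  ext q
  constructor
  · obtain ⟨⟨v, w⟩, rfl | rfl⟩ := q
    · exact fun hw ↦ .inr ⟨w, fun h ↦ hw (inr_eq_root_iff.2 h), rfl⟩
    · exact fun hv ↦ .inl ⟨v, fun h ↦ hv (inl_eq_root_iff.2 h), rfl⟩
  · rintro (⟨v, hv, rfl⟩ | ⟨w, hw, rfl⟩)
    · exact inl_eq_root_iff.not.2 hv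
    · exact inr_eq_root_iff.not.2 hw

lemma ncard_image_inl_union_image_inr [Finite V₁] [Finite V₂] {A : Set V₁} (hA : o₁ ∉ A)
    (B : Set V₂) : (inl o₁ o₂ '' A ∪ inr o₁ o₂ '' B).ncard = A.ncard + B.ncard := by
  have hdisj : Disjoint (inl o₁ o₂ '' A) (inr o₁ o₂ '' B) := by
    rw [disjoint_left]
    rintro _ ⟨v, hv, rfl⟩ ⟨w, -, hvw⟩
    have hv₁ : o₁ = v := congrArg (fun q : Wedge o₁ o₂ ↦ q.1.1) hvw
    exact hA (hv₁ ▸ hv)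
  rw [ncard_union_eq hdisj, ncard_image_of_injective _ inl_injective,
    ncard_image_of_injective _ inr_injective]

lemma ncard_pathEdges_add_ncard_pathEdges_le [Finite V₁] [Finite V₂] {α : Type} (h₁ : p₁ o₁ = o₁)
    (h₂ : p₂ o₂ = o₂) {f₁ : α → V₁} {f₂ : α → V₂} {f : α → Wedge o₁ o₂} {X₁ X₂ : Set α}
    (hf₁ : ∀ a ∈ X₁, f a = inl o₁ o₂ (f₁ a)) (hf₂ : ∀ a ∈ X₂, f a = inr o₁ o₂ (f₂ a)) :
    (pathEdges o₁ p₁ f₁ X₁).ncard + (pathEdges o₂ p₂ f₂ X₂).ncard ≤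
      (pathEdges (root o₁ o₂) (parent h₁ h₂) f (X₁ ∪ X₂)).ncard := by
  rw [← ncard_image_inl_union_image_inr (o₂ := o₂) fun h ↦ h.1 rfl]
  refine ncard_le_ncard (union_subset ?_ ?_)
  · rintro _ ⟨v, ⟨hv, a, ha, hva⟩, rfl⟩
    exact ⟨inl_eq_root_iff.not.2 hv, a, .inl ha, hf₁ a ha ▸ anc_inl h₁ h₂ hva⟩
  · rintro _ ⟨v, ⟨hv, a, ha, hva⟩, rfl⟩
    exact ⟨inr_eq_root_iff.not.2 hv, a, .inr ha, hf₂ a ha ▸ anc_inr h₁ h₂ hva⟩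

end Wedge

end Trees

section DepthDecompositions

variable {α : Type} {M : Matroid α} {d : ℕ}

namespace HasDepthDecompOfDepthLE

lemma mono {d' : ℕ} (h : HasDepthDecompOfDepthLE M d) (hd : d ≤ d') :
    HasDepthDecompOfDepthLE M d' := by
  obtain ⟨V, root, parent, f, hdec, hdepth⟩ := h
  exact ⟨V, root, parent, f, hdec, hdepth.trans hd⟩

variable [M.RankFinite]

lemma of_mrank_ground_eq_zero (h : mrank M M.E = 0) : HasDepthDecompOfDepthLE M 0 := by
  have htree : IsRootedTree () id := ⟨rfl, fun _ ↦ ⟨0, rfl⟩⟩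
  refine ⟨Unit, (), id, fun _ ↦ (), ⟨inferInstance, htree, by simp [h], fun X hX ↦ ?_⟩,
    htree.treeDepth_le_iff.2 fun _ ↦ rfl⟩
  exact (mrank_mono hX).trans (h.trans_le (Nat.zero_le _))

lemma of_contractElem_of_mrank_eq_zero {e : α} (he : mrank M {e} = 0)
    (h : HasDepthDecompOfDepthLE (M ／ {e}) d) : HasDepthDecompOfDepthLE M d := by
  obtain ⟨V, root, parent, f, ⟨hfin, htree, hrank, hpath⟩, hdepth⟩ := h
  refine ⟨V, root, parent, f, ⟨hfin, htree, ?_, fun X hX ↦ ?_⟩, hdepth⟩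
  · rw [← hrank, ← mrank_contract_ground_add_mrank M {e}, he, Nat.add_zero]
  · calc mrank M X ≤ mrank (M ／ {e}) (X \ {e}) + mrank M {e} :=
          mrank_le_mrank_contract_sdiff_add_mrank M {e} X
      _ = mrank (M ／ {e}) (X \ {e}) := by rw [he, Nat.add_zero]
      _ ≤ (pathEdges root parent f (X \ {e})).ncard := hpath _ (sdiff_subset_sdiff_left hX)
      _ ≤ (pathEdges root parent f X).ncard :=
        ncard_le_ncard (pathEdges_mono root parent f sdiff_subset)

lemma of_contractElem_of_mrank_eq_one {e : α} (he : mrank M {e} = 1)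
    (h : HasDepthDecompOfDepthLE (M ／ {e}) d) : HasDepthDecompOfDepthLE M (d + 1) := by
  obtain ⟨V, root, parent, f, ⟨hfin, htree, hrank, hpath⟩, hdepth⟩ := h
  have hdepth' := htree.treeDepth_le_iff.1 hdepth
  refine ⟨Option V, none, addRoot root parent, some ∘ f,
    ⟨inferInstance, htree.addRoot, ?_, fun X hX ↦ ?_⟩, htree.addRoot.treeDepth_le_iff.2 ?_⟩
  · rw [← mrank_contract_ground_add_mrank M {e}, he, hrank]
    exact (ncard_setOf_ne_none root).symm
  · obtain rfl | hne := X.eq_empty_or_nonempty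
    · exact (mrank_empty M).trans_le (Nat.zero_le _)
    calc mrank M X ≤ mrank (M ／ {e}) (X \ {e}) + mrank M {e} :=
          mrank_le_mrank_contract_sdiff_add_mrank M {e} X
      _ = mrank (M ／ {e}) (X \ {e}) + 1 := by rw [he]
      _ ≤ (pathEdges root parent f (X \ {e})).ncard + 1 := by
        gcongr
        exact hpath _ (sdiff_subset_sdiff_left hX)
      _ ≤ (pathEdges root parent f X).ncard + 1 := by
        gcongr
        · exact toFinite _
        · exact pathEdges_mono root parent f sdiff_subset
      _ ≤ (pathEdges none (addRoot root parent) (some ∘ f) X).ncard :=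
        ncard_pathEdges_add_one_le_addRoot htree f hne
  · rintro (- | v)
    · exact Function.iterate_fixed rfl _
    · exact addRoot_iterate_succ (hdepth' v)

lemma of_contractElem {e : α} (h : HasDepthDecompOfDepthLE (M ／ {e}) d) :
    HasDepthDecompOfDepthLE M (d + 1) := by
  obtain he | he := Nat.le_one_iff_eq_zero_or_eq_one.1 (mrank_singleton_le_one M e)
  · exact (h.of_contractElem_of_mrank_eq_zero he).mono (Nat.le_succ d)
  · exact h.of_contractElem_of_mrank_eq_one he

lemma of_contract {C : Set α} (hC : C.Finite)
    (h : HasDepthDecompOfDepthLE (M ／ C) d) : HasDepthDecompOfDepthLE M (d + C.ncard) := by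
  induction C, hC using Set.Finite.induction_on generalizing d with
  | empty => simpa using h
  | @insert e C heC hC ih =>
    rw [ncard_insert_of_notMem heC hC, Nat.add_comm C.ncard, ← Nat.add_assoc]
    refine ih (of_contractElem (e := e) ?_)
    rwa [Matroid.contract_contract, union_singleton]

lemma mrank_ground (M : Matroid α) [M.RankFinite] : HasDepthDecompOfDepthLE M (mrank M M.E) := by
  obtain ⟨B, hB⟩ := M.exists_isBase
  have hrank : mrank M M.E = B.ncard := mrank_eq_ncard_of_isBasis hB.isBasis_ground
  have hrankB : mrank M B = B.ncard := mrank_eq_ncard_of_isBasis hB.indep.isBasis_self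
  have hzero : mrank (M ／ B) (M ／ B).E = 0 := by
    have hsum := mrank_contract_ground_add_mrank M B
    omega
  simpa only [hrank, Nat.zero_add] using
    (of_mrank_ground_eq_zero hzero).of_contract hB.indep.finite

end HasDepthDecompOfDepthLE

end DepthDecompositions

section Circuits

variable {α : Type*} {M : Matroid α} {C D W Z : Set α} {x : α}

lemma isCircuit_sdiff_nonempty (hW : M.IsCircuit W) (hZ : M.IsCircuit Z) (hne : W ≠ Z) :
    (W \ Z).Nonempty :=
  sdiff_nonempty.2 fun h ↦ hne (hW.eq_of_subset_isCircuit hZ h)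

lemma exists_isCircuit_sdiff_ssubset {a b : α} (hZ : M.IsCircuit Z) (hW : M.IsCircuit W)
    (hZW : (Z ∩ W).Nonempty) (ha : a ∈ Z \ W) (hb : b ∈ W \ Z) :
    ∃ Y, M.IsCircuit Y ∧ b ∈ Y ∧ (a ∈ Y ∨ (Z ∩ Y).Nonempty ∧ Y \ Z ⊂ W \ Z) := by
  obtain ⟨t, htZ, htW⟩ := hZW
  obtain ⟨Z', hZ'sub, hZ', haZ'⟩ := hZ.strong_elimination hW htZ htW ha.1 ha.2
  by_cases hbZ' : b ∈ Z'
  · exact ⟨Z', hZ', hbZ', .inl haZ'⟩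
  obtain ⟨u, huZ', huZ⟩ := isCircuit_sdiff_nonempty hZ' hZ
    (by rintro rfl; exact (hZ'sub htZ).2 rfl)
  have huW : u ∈ W := (hZ'sub huZ').1.resolve_left huZ
  obtain ⟨Y, hYsub, hY, hbY⟩ := hW.strong_elimination hZ' huW huZ' hb.1 hbZ'
  have hYW : Y \ Z ⊆ W \ Z := fun y hy ↦
    ⟨(hYsub hy.1).1.elim id fun hyZ' ↦ (hZ'sub hyZ').1.resolve_left hy.2, hy.2⟩
  obtain ⟨v, hvY, hvW⟩ := isCircuit_sdiff_nonempty hY hW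
    (by rintro rfl; exact (hYsub huW).2 rfl)
  have hvZ : v ∈ Z := (hZ'sub ((hYsub hvY).1.resolve_left hvW)).1.resolve_right hvW
  exact ⟨Y, hY, hbY, .inr ⟨⟨v, hvZ, hvY⟩, hYW.ssubset_of_mem_notMem ⟨huW, huZ⟩
    fun huY ↦ (hYsub huY.1).2 rfl⟩⟩

lemma exists_isCircuit_mem_mem [M.Finitary] {a b : α} (hZ : M.IsCircuit Z) (hW : M.IsCircuit W)
    (hZW : (Z ∩ W).Nonempty) (ha : a ∈ Z) (hb : b ∈ W) :
    ∃ Y, M.IsCircuit Y ∧ a ∈ Y ∧ b ∈ Y := by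
  induction hn : (W \ Z).ncard using Nat.strong_induction_on generalizing W with
  | _ n ih =>
    by_cases haW : a ∈ W
    · exact ⟨W, hW, haW, hb⟩
    by_cases hbZ : b ∈ Z
    · exact ⟨Z, hZ, ha, hbZ⟩
    obtain ⟨Y, hY, hbY, haY | ⟨hZY, hlt⟩⟩ :=
      exists_isCircuit_sdiff_ssubset hZ hW hZW ⟨ha, haW⟩ ⟨hb, hbZ⟩
    · exact ⟨Y, hY, haY, hbY⟩
    · exact ih _ (hn ▸ ncard_lt_ncard hlt hW.finite.sdiff) hY hZY hbY rfl

lemma contractElem_indep_iff_of_notMem_closure {I X : Set α} (hxE : x ∈ M.E)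
    (hx : x ∉ M.closure X) (hIX : I ⊆ X) : (M ／ {x}).Indep I ↔ M.Indep I := by
  have hxI : x ∉ M.closure I := fun h ↦ hx (M.closure_subset_closure hIX h)
  rw [(Matroid.isNonloop_of_notMem_closure hx hxE).contractElem_indep_iff]
  refine ⟨fun h ↦ h.2.subset (subset_insert x I), fun hI ↦ ?_⟩
  exact ⟨fun h ↦ hxI (M.mem_closure_of_mem h hI.subset_ground),
    hI.insert_indep_iff.2 (.inl ⟨hxE, hxI⟩)⟩

lemma contractElem_isCircuit_iff_of_notMem_closure {X : Set α} (hxE : x ∈ M.E)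
    (hx : x ∉ M.closure X) (hCX : C ⊆ X) : (M ／ {x}).IsCircuit C ↔ M.IsCircuit C := by
  by_cases hxC : x ∈ C
  · refine iff_of_false (fun h ↦ (h.subset_ground hxC).2 rfl) fun h ↦ hx ?_
    exact M.closure_subset_closure hCX (M.mem_closure_of_mem hxC h.subset_ground)
  have hground : C ⊆ (M ／ {x}).E ↔ C ⊆ M.E := by
    simp [subset_sdiff, hxC]
  simp only [Matroid.isCircuit_iff_forall_ssubset, Matroid.Dep, hground,
    contractElem_indep_iff_of_notMem_closure hxE hx hCX]
  refine and_congr_right fun _ ↦ forall₂_congr fun I hI ↦ ?_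
  exact contractElem_indep_iff_of_notMem_closure hxE hx (hI.subset.trans hCX)

/-- Two disjoint circuits are *skew* if the restriction of the matroid to their union is the
direct sum of the restrictions to each of them. This is encoded by saying that the union contains
no further circuit. -/
structure SkewCircuits (M : Matroid α) (C D : Set α) : Prop where
  left : M.IsCircuit C
  right : M.IsCircuit D
  disjoint : Disjoint C D
  eq_or_eq : ∀ ⦃W⦄, M.IsCircuit W → W ⊆ C ∪ D → W = C ∨ W = D

lemma SkewCircuits.of_contract (hC : M.IsCircuit C) (hD : M.IsCircuit D)
    (hCD : (M ／ C).IsCircuit D) : SkewCircuits M C D where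
  left := hC
  right := hD
  disjoint := (subset_sdiff.1 hCD.subset_ground).2.symm
  eq_or_eq W hW hWCD := by
    by_cases hWC : W ⊆ C
    · exact .inl (hW.eq_of_subset_isCircuit hC hWC)
    have hWD : W \ C = D :=
      hCD.eq_of_dep_subset (hW.contract_dep_of_not_subset hWC) (sdiff_subset_iff.2 hWCD)
    exact .inr (hD.eq_of_subset_isCircuit hW (hWD ▸ sdiff_subset)).symm

namespace SkewCircuits

lemma symm (h : SkewCircuits M C D) : SkewCircuits M D C where
  left := h.right
  right := h.left
  disjoint := h.disjoint.symm
  eq_or_eq _ hW hWDC := (h.eq_or_eq hW (union_comm D C ▸ hWDC)).symm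

lemma contractElem (h : SkewCircuits M C D) (hxE : x ∈ M.E) (hx : x ∉ M.closure (C ∪ D)) :
    SkewCircuits (M ／ {x}) C D where
  left := (contractElem_isCircuit_iff_of_notMem_closure hxE hx subset_union_left).2 h.left
  right := (contractElem_isCircuit_iff_of_notMem_closure hxE hx subset_union_right).2 h.right
  disjoint := h.disjoint
  eq_or_eq _ hW hWCD :=
    h.eq_or_eq ((contractElem_isCircuit_iff_of_notMem_closure hxE hx hWCD).1 hW) hWCD

lemma eq_left_of_mem (h : SkewCircuits M C D) {c : α} (hW : M.IsCircuit W) (hWCD : W ⊆ C ∪ D)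
    (hcW : c ∈ W) (hcC : c ∈ C) : W = C :=
  (h.eq_or_eq hW hWCD).resolve_right fun hWD ↦ h.disjoint.notMem_of_mem_left hcC (hWD ▸ hcW)

lemma closure_union_sdiff (h : SkewCircuits M C D) (c d : α) :
    M.closure (C \ {c} ∪ D \ {d}) = M.closure (C ∪ D) := by
  rw [← M.closure_union_closure_left_eq, ← M.closure_union_closure_right_eq,
    h.left.closure_sdiff_singleton_eq, h.right.closure_sdiff_singleton_eq,
    M.closure_union_closure_left_eq, M.closure_union_closure_right_eq]

lemma left_subset_union (h : SkewCircuits M C D) {Z' : Set α} {c : α} (hZ : M.IsCircuit Z)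
    (hZ' : M.IsCircuit Z') (hxZ : x ∈ Z) (hxZ' : x ∈ Z') (hsub : Z ⊆ insert x (C ∪ D))
    (hsub' : Z' ⊆ insert x (C ∪ D)) (hcC : c ∈ C) (hcZ : c ∈ Z) (hcZ' : c ∉ Z') :
    C ⊆ Z ∪ Z' := by
  obtain ⟨W, hWsub, hW, hcW⟩ := hZ.strong_elimination hZ' hxZ hxZ' hcZ hcZ'
  have hWCD : W ⊆ C ∪ D := hWsub.trans (sdiff_singleton_subset_iff.2 (union_subset hsub hsub'))
  exact h.eq_left_of_mem hW hWCD hcW hcC ▸ hWsub.trans sdiff_subset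

lemma exists_ncard_add_lt_of_subset_insert [M.Finitary] (h : SkewCircuits M C D)
    (hZ : M.IsCircuit Z) (hx : x ∉ C ∪ D) (hxZ : x ∈ Z) (hsub : Z ⊆ insert x (C ∪ D))
    (hZC : (Z ∩ C).Nonempty) (hZD : (Z ∩ D).Nonempty) :
    ∃ Z₁ Z₂, M.IsCircuit Z₁ ∧ M.IsCircuit Z₂ ∧ C.ncard + D.ncard < Z₁.ncard + Z₂.ncard := by
  obtain ⟨c, hcZ, hcC⟩ := hZC
  obtain ⟨d, hdZ, hdD⟩ := hZD
  have hxcl : x ∈ M.closure (C \ {c} ∪ D \ {d}) := by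
    rw [h.closure_union_sdiff]
    refine M.closure_subset_closure ?_ (hZ.mem_closure_sdiff_singleton_of_mem hxZ)
    exact sdiff_singleton_subset_iff.2 hsub
  obtain ⟨Z', hZ'sub, hZ', hxZ'⟩ := Matroid.exists_isCircuit_of_mem_closure hxcl
    (notMem_subset (union_subset_union sdiff_subset sdiff_subset) hx)
  have hZ'CD : Z' ⊆ insert x (C ∪ D) :=
    hZ'sub.trans (insert_subset_insert (union_subset_union sdiff_subset sdiff_subset))
  have hcZ' : c ∉ Z' := fun hc ↦ by
    obtain rfl | ⟨-, hcc⟩ | ⟨hcD, -⟩ := hZ'sub hc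
    · exact hx (.inl hcC)
    · exact hcc rfl
    · exact h.disjoint.notMem_of_mem_left hcC hcD
  have hdZ' : d ∉ Z' := fun hd ↦ by
    obtain rfl | ⟨hdC, -⟩ | ⟨-, hdd⟩ := hZ'sub hd
    · exact hx (.inr hdD)
    · exact h.disjoint.notMem_of_mem_left hdC hdD
    · exact hdd rfl
  have hC : C ⊆ Z ∪ Z' := h.left_subset_union hZ hZ' hxZ hxZ' hsub hZ'CD hcC hcZ hcZ'
  have hD : D ⊆ Z ∪ Z' := h.symm.left_subset_union hZ hZ' hxZ hxZ' (union_comm C D ▸ hsub)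
    (union_comm C D ▸ hZ'CD) hdD hdZ hdZ'
  have hfin : (Z ∪ Z').Finite := hZ.finite.union hZ'.finite
  refine ⟨Z, Z', hZ, hZ', ?_⟩
  calc C.ncard + D.ncard
      = (C ∪ D).ncard := (ncard_union_eq h.disjoint h.left.finite h.right.finite).symm
    _ ≤ (Z ∪ Z').ncard := ncard_le_ncard (union_subset hC hD) hfin
    _ < (Z ∪ Z').ncard + (Z ∩ Z').ncard :=
        Nat.lt_add_of_pos_right ((ncard_pos (hZ.finite.inter_of_left _)).2 ⟨x, hxZ, hxZ'⟩)
    _ = Z.ncard + Z'.ncard := ncard_union_add_ncard_inter Z Z' hZ.finite hZ'.finite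

end SkewCircuits

lemma exists_isCircuit_subset_sdiff_of_eliminate {A B : Set α} (hZ : M.IsCircuit Z)
    (hW : M.IsCircuit W) (hxZ : x ∈ Z) (hxW : x ∈ W) (hWA : W ⊆ insert x A)
    (hAB : Disjoint A B) (hxB : x ∉ B) (hZB : (Z ∩ B).Nonempty) :
    ∃ Y, M.IsCircuit Y ∧ Y ⊆ (Z ∪ A) \ {x} ∧ (Y ∩ A).Nonempty ∧ (Y ∩ B).Nonempty := by
  obtain ⟨b, hbZ, hbB⟩ := hZB
  have hbW : b ∉ W := fun hb ↦ (hWA hb).elim (fun h ↦ hxB (h ▸ hbB))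
    (hAB.notMem_of_mem_right hbB)
  obtain ⟨Y, hYsub, hY, hbY⟩ := hZ.strong_elimination hW hxZ hxW hbZ hbW
  have hYZA : Y ⊆ (Z ∪ A) \ {x} := fun y hy ↦
    ⟨(hYsub hy).1.imp_right fun hyW ↦ (hWA hyW).resolve_left (hYsub hy).2, (hYsub hy).2⟩
  obtain ⟨a, haY, haZ⟩ := isCircuit_sdiff_nonempty hY hZ
    (by rintro rfl; exact (hYsub hxZ).2 rfl)
  exact ⟨Y, hY, hYZA, ⟨a, haY, (hYZA haY).1.resolve_left haZ⟩, ⟨b, hbY, hbB⟩⟩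

namespace SkewCircuits

lemma exists_isCircuit_or_ncard_add_lt [M.Finitary] (h : SkewCircuits M C D)
    (hZ : M.IsCircuit Z) (hxZ : x ∈ Z) (hx : x ∉ C ∪ D) (hxcl : x ∈ M.closure (C ∪ D))
    (hZC : (Z ∩ C).Nonempty) (hZD : (Z ∩ D).Nonempty) :
    (∃ Y, M.IsCircuit Y ∧ (Y ∩ C).Nonempty ∧ (Y ∩ D).Nonempty ∧
      Y \ (C ∪ D) ⊂ Z \ (C ∪ D)) ∨
    ∃ Z₁ Z₂, M.IsCircuit Z₁ ∧ M.IsCircuit Z₂ ∧ C.ncard + D.ncard < Z₁.ncard + Z₂.ncard := by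
  obtain ⟨W, hWsub, hW, hxW⟩ := Matroid.exists_isCircuit_of_mem_closure hxcl hx
  have hssub {Y : Set α} (hY : Y ⊆ (Z ∪ (C ∪ D)) \ {x}) : Y \ (C ∪ D) ⊂ Z \ (C ∪ D) := by
    have hsub : Y \ (C ∪ D) ⊆ Z \ (C ∪ D) := fun y hy ↦ ⟨(hY hy.1).1.resolve_right hy.2, hy.2⟩
    exact hsub.ssubset_of_mem_notMem ⟨hxZ, hx⟩ fun hxY ↦ (hY hxY.1).2 rfl
  by_cases hWC : (W ∩ C).Nonempty
  · by_cases hWD : (W ∩ D).Nonempty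
    · exact .inr (h.exists_ncard_add_lt_of_subset_insert hW hx hxW hWsub hWC hWD)
    have hWxC : W ⊆ insert x C := fun w hw ↦
      (hWsub hw).imp_right fun hwCD ↦ hwCD.resolve_right fun hwD ↦ hWD ⟨w, hw, hwD⟩
    obtain ⟨Y, hY, hYsub, hYC, hYD⟩ := exists_isCircuit_subset_sdiff_of_eliminate hZ hW hxZ hxW
      hWxC h.disjoint (fun hxD ↦ hx (.inr hxD)) hZD
    exact .inl ⟨Y, hY, hYC, hYD, hssub (hYsub.trans (by gcongr; exact subset_union_left))⟩
  · have hWxD : W ⊆ insert x D := fun w hw ↦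
      (hWsub hw).imp_right fun hwCD ↦ hwCD.resolve_left fun hwC ↦ hWC ⟨w, hw, hwC⟩
    obtain ⟨Y, hY, hYsub, hYD, hYC⟩ := exists_isCircuit_subset_sdiff_of_eliminate hZ hW hxZ hxW
      hWxD h.disjoint.symm (fun hxC ↦ hx (.inl hxC)) hZC
    exact .inl ⟨Y, hY, hYC, hYD, hssub (hYsub.trans (by gcongr; exact subset_union_right))⟩

lemma exists_ncard_add_lt [M.Finitary] (h : SkewCircuits M C D) (hZ : M.IsCircuit Z)
    (hZC : (Z ∩ C).Nonempty) (hZD : (Z ∩ D).Nonempty) :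
    ∃ Z₁ Z₂, M.IsCircuit Z₁ ∧ M.IsCircuit Z₂ ∧ C.ncard + D.ncard < Z₁.ncard + Z₂.ncard := by
  -- Elements of `Z` outside the closure of `C ∪ D` are contracted, which keeps `C` and `D` skew;
  -- those inside the closure are eliminated from `Z`.
  induction hn : (Z \ (C ∪ D)).ncard using Nat.strong_induction_on generalizing M Z with
  | _ n ih =>
    obtain ⟨x, hxZ, hx⟩ : (Z \ (C ∪ D)).Nonempty := by
      refine sdiff_nonempty.2 fun hsub ↦ ?_
      obtain ⟨⟨c, hcZ, hcC⟩, ⟨d, hdZ, hdD⟩⟩ := And.intro hZC hZD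
      exact h.disjoint.notMem_of_mem_right hdD (h.eq_left_of_mem hZ hsub hcZ hcC ▸ hdZ)
    have hlt {Y : Set α} (hY : Y \ (C ∪ D) ⊂ Z \ (C ∪ D)) : (Y \ (C ∪ D)).ncard < n :=
      hn ▸ ncard_lt_ncard hY hZ.finite.sdiff
    by_cases hxcl : x ∈ M.closure (C ∪ D)
    · obtain ⟨Y, hY, hYC, hYD, hYZ⟩ | hlarger :=
        h.exists_isCircuit_or_ncard_add_lt hZ hxZ hx hxcl hZC hZD
      · exact ih _ (hlt hYZ) h hY hYC hYD rfl
      · exact hlarger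
    have hZx : (M ／ {x}).IsCircuit (Z \ {x}) := by
      obtain ⟨c, hcZ, hcC⟩ := hZC
      exact hZ.contractElem_isCircuit ⟨x, hxZ, c, hcZ, fun hxc ↦ hx (.inl (hxc ▸ hcC))⟩ hxZ
    have hinter {A : Set α} (hA : A ⊆ C ∪ D) : Z \ {x} ∩ A = Z ∩ A := by
      rw [sdiff_inter_right_comm]
      exact sdiff_singleton_eq_self fun hxA ↦ hx (hA hxA.2)
    obtain ⟨Z₁, Z₂, hZ₁, hZ₂, hsum⟩ := ih _
      (hlt <| by
        rw [sdiff_sdiff_comm]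
        exact sdiff_singleton_ssubset.2 ⟨hxZ, hx⟩)
      (h.contractElem (hZ.subset_ground hxZ) hxcl) hZx
      (hinter subset_union_left ▸ hZC) (hinter subset_union_right ▸ hZD) rfl
    obtain ⟨Y₁, hY₁, hZY₁, -⟩ := hZ₁.exists_subset_isCircuit_of_contract
    obtain ⟨Y₂, hY₂, hZY₂, -⟩ := hZ₂.exists_subset_isCircuit_of_contract
    exact ⟨Y₁, Y₂, hY₁, hY₂, hsum.trans_le
      (add_le_add (ncard_le_ncard hZY₁ hY₁.finite) (ncard_le_ncard hZY₂ hY₂.finite))⟩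

end SkewCircuits

/-- A matroid is connected up to loops if any two distinct nonloops lie in a common circuit. Loops
are disregarded because contractions create them. -/
def ConnectedUpToLoops (M : Matroid α) : Prop :=
  ∀ ⦃x y⦄, M.IsNonloop x → M.IsNonloop y → x ≠ y → ∃ Z, M.IsCircuit Z ∧ x ∈ Z ∧ y ∈ Z

lemma ConnectedUpToLoops.ncard_isCircuit_contract_lt [M.Finitary] (hM : ConnectedUpToLoops M)
    (hC : M.IsCircuit C) (hC1 : 1 < C.ncard)
    (hmax : ∀ ⦃Z⦄, M.IsCircuit Z → Z.ncard ≤ C.ncard) (hD : (M ／ C).IsCircuit D) :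
    D.ncard < C.ncard := by
  obtain ⟨Z, hZ, hDZ, -⟩ := hD.exists_subset_isCircuit_of_contract
  obtain rfl | hDZ := hDZ.eq_or_ssubset
  swap
  · exact (ncard_lt_ncard hDZ hZ.finite).trans_le (hmax hZ)
  by_contra! hle
  have hCnt : C.Nontrivial := (one_lt_ncard_iff_nontrivial_and_finite.1 hC1).1
  have hDnt : D.Nontrivial := (one_lt_ncard_iff_nontrivial_and_finite.1 (hC1.trans_le hle)).1
  have hskew := SkewCircuits.of_contract hC hZ hD
  obtain ⟨⟨c, hc⟩, ⟨d, hd⟩⟩ := And.intro hC.nonempty hZ.nonempty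
  obtain ⟨W, hW, hcW, hdW⟩ := hM (hC.isNonloop_of_mem hCnt hc) (hZ.isNonloop_of_mem hDnt hd)
    (hskew.disjoint.ne_of_mem hc hd)
  obtain ⟨Z₁, Z₂, hZ₁, hZ₂, hlt⟩ := hskew.exists_ncard_add_lt hW ⟨c, hcW, hc⟩ ⟨d, hdW, hd⟩
  have hle₁ := hmax hZ₁
  have hle₂ := hmax hZ₂
  omega

end Circuits

section Separators

/-- A *separator* of a matroid is a set of elements containing every circuit it meets, that is, a
union of components. -/
def IsSeparator {α : Type*} (M : Matroid α) (S : Set α) : Prop :=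
  S ⊆ M.E ∧ ∀ ⦃C⦄, M.IsCircuit C → (C ∩ S).Nonempty → C ⊆ S

lemma IsSeparator.indep_union {α : Type*} {M : Matroid α} {S I J : Set α} (hS : IsSeparator M S)
    (hI : M.Indep I) (hJ : M.Indep J) (hIS : I ⊆ S) (hJS : Disjoint J S) : M.Indep (I ∪ J) := by
  rw [Matroid.indep_iff_forall_subset_not_isCircuit
    (union_subset hI.subset_ground hJ.subset_ground)]
  intro C hCIJ hC
  by_cases hCS : (C ∩ S).Nonempty
  · refine hC.not_indep (hI.subset fun a ha ↦ (hCIJ ha).resolve_right fun haJ ↦ ?_)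
    exact hJS.notMem_of_mem_left haJ (hS.2 hC hCS ha)
  · refine hC.not_indep (hJ.subset fun a ha ↦ (hCIJ ha).resolve_left fun haI ↦ ?_)
    exact hCS ⟨a, ha, hIS haI⟩

variable {α : Type} {M : Matroid α} {S K : Set α}

lemma IsSeparator.mrank_add_mrank_compl [M.RankFinite] (hS : IsSeparator M S) :
    mrank M S + mrank M (M.E \ S) = mrank M M.E := by
  apply le_antisymm
  · obtain ⟨I, hI⟩ := M.exists_isBasis S hS.1
    obtain ⟨J, hJ⟩ := M.exists_isBasis (M.E \ S) sdiff_subset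
    have hJS : Disjoint J S := disjoint_sdiff_left.mono_left hJ.subset
    have hIJ : M.Indep (I ∪ J) := hS.indep_union hI.indep hJ.indep hI.subset hJS
    calc mrank M S + mrank M (M.E \ S)
        = I.ncard + J.ncard := by
          rw [mrank_eq_ncard_of_isBasis hI, mrank_eq_ncard_of_isBasis hJ]
      _ = (I ∪ J).ncard :=
        (ncard_union_eq (hJS.mono_right hI.subset).symm hI.indep.finite hJ.indep.finite).symm
      _ = mrank M (I ∪ J) := (mrank_eq_ncard_of_isBasis hIJ.isBasis_self).symm
      _ ≤ mrank M M.E := mrank_mono hIJ.subset_ground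
  · calc mrank M M.E = mrank M (S ∪ M.E \ S) := by rw [union_sdiff_cancel hS.1]
      _ ≤ mrank M S + mrank M (M.E \ S) := mrank_union_le M S (M.E \ S)

lemma HasDepthDecompOfDepthLE.of_separator [M.RankFinite] {d : ℕ} (hS : IsSeparator M S)
    (h₁ : HasDepthDecompOfDepthLE (M ↾ S) d) (h₂ : HasDepthDecompOfDepthLE (M ↾ (M.E \ S)) d) :
    HasDepthDecompOfDepthLE M d := by
  classical
  obtain ⟨V₁, o₁, p₁, f₁, ⟨hfin₁, htree₁, hrank₁, hpath₁⟩, hdepth₁⟩ := h₁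
  obtain ⟨V₂, o₂, p₂, f₂, ⟨hfin₂, htree₂, hrank₂, hpath₂⟩, hdepth₂⟩ := h₂
  rw [Matroid.restrict_ground_eq, mrank_restrict M subset_rfl] at hrank₁ hrank₂
  rw [htree₁.treeDepth_le_iff] at hdepth₁
  rw [htree₂.treeDepth_le_iff] at hdepth₂
  have htree := Wedge.isRootedTree htree₁ htree₂
  let f (a : α) : Wedge o₁ o₂ := if a ∈ S then .inl o₁ o₂ (f₁ a) else .inr o₁ o₂ (f₂ a)
  refine ⟨Wedge o₁ o₂, .root o₁ o₂, .parent htree₁.1 htree₂.1, f,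
    ⟨inferInstance, htree, ?_, fun X hX ↦ ?_⟩, htree.treeDepth_le_iff.2 fun q ↦
      (Wedge.parent_iterate_eq_root_iff _ _).2 ⟨hdepth₁ _, hdepth₂ _⟩⟩
  · rw [Wedge.setOf_ne_root, Wedge.ncard_image_inl_union_image_inr fun h : o₁ ≠ o₁ ↦ h rfl,
      ← hrank₁, ← hrank₂, hS.mrank_add_mrank_compl]
  · have hXS : X \ S ⊆ M.E \ S := sdiff_subset_sdiff_left hX
    have hle₁ := hpath₁ (X ∩ S) inter_subset_right
    have hle₂ := hpath₂ (X \ S) hXS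
    rw [mrank_restrict M inter_subset_right] at hle₁
    rw [mrank_restrict M hXS] at hle₂
    calc mrank M X = mrank M (X ∩ S ∪ X \ S) := by rw [inter_union_sdiff]
      _ ≤ mrank M (X ∩ S) + mrank M (X \ S) := mrank_union_le M _ _
      _ ≤ (pathEdges o₁ p₁ f₁ (X ∩ S)).ncard + (pathEdges o₂ p₂ f₂ (X \ S)).ncard :=
        Nat.add_le_add hle₁ hle₂
      _ ≤ (pathEdges (.root o₁ o₂) (.parent htree₁.1 htree₂.1) f (X ∩ S ∪ X \ S)).ncard :=
        Wedge.ncard_pathEdges_add_ncard_pathEdges_le _ _ (fun _ ha ↦ if_pos ha.2)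
          fun _ ha ↦ if_neg ha.2
      _ = (pathEdges (.root o₁ o₂) (.parent htree₁.1 htree₂.1) f X).ncard := by
        rw [inter_union_sdiff]

lemma IsComponentOf.isSeparator [M.Finitary] (hK : IsComponentOf M K) : IsSeparator M K := by
  obtain ⟨x, -, rfl⟩ := hK
  refine ⟨sep_subset _ _, ?_⟩
  rintro C hC ⟨y, hyC, -, hxy⟩ z hzC
  refine ⟨hC.subset_ground hzC, .inr ?_⟩
  obtain rfl | ⟨Z, hZ, hxZ, hyZ⟩ := hxy
  · exact ⟨C, isCircuitOf_iff.2 hC, hyC, hzC⟩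
  · obtain ⟨Y, hY, hxY, hzY⟩ :=
      exists_isCircuit_mem_mem (isCircuitOf_iff.1 hZ) hC ⟨y, hyZ, hyC⟩ hxZ hzC
    exact ⟨Y, isCircuitOf_iff.2 hY, hxY, hzY⟩

lemma exists_isSeparator_of_not_connectedUpToLoops [M.RankFinite] (hM : ¬ ConnectedUpToLoops M) :
    ∃ S, IsSeparator M S ∧ 0 < mrank M S ∧ 0 < mrank M (M.E \ S) := by
  simp only [ConnectedUpToLoops, not_forall] at hM
  obtain ⟨x, y, hx, hy, hxy, hno⟩ := hM
  have hK : IsComponentOf M {z ∈ M.E | x = z ∨ ∃ C, IsCircuitOf M C ∧ x ∈ C ∧ z ∈ C} :=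
    ⟨x, hx.mem_ground, rfl⟩
  refine ⟨_, hK.isSeparator, mrank_pos_of_isNonloop hx ⟨hx.mem_ground, .inl rfl⟩,
    mrank_pos_of_isNonloop hy ⟨hy.mem_ground, ?_⟩⟩
  rintro ⟨-, rfl | ⟨C, hC, hxC, hyC⟩⟩
  · exact hxy rfl
  · exact hno ⟨C, isCircuitOf_iff.1 hC, hxC, hyC⟩

end Separators

section LargestCircuit

lemma exists_isCircuit_forall_ncard_le {α : Type*} {M : Matroid α} {ℓ : ℕ}
    (hex : ∃ C, M.IsCircuit C) (hall : ∀ ⦃C⦄, M.IsCircuit C → C.ncard ≤ ℓ) :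
    ∃ C, M.IsCircuit C ∧ ∀ ⦃Z⦄, M.IsCircuit Z → Z.ncard ≤ C.ncard := by
  have hbdd : BddAbove (ncard '' {C | M.IsCircuit C}) := ⟨ℓ, forall_mem_image.2 hall⟩
  have hne : {C | M.IsCircuit C}.Nonempty := hex
  obtain ⟨C, hC, hsup⟩ := Nat.sSup_mem (hne.image ncard) hbdd
  exact ⟨C, hC, fun Z hZ ↦ hsup ▸ le_csSup hbdd (mem_image_of_mem ncard hZ)⟩

variable {α : Type} {M : Matroid α} [M.RankFinite] {ℓ : ℕ}

lemma ConnectedUpToLoops.mrank_ground_le_one (hM : ConnectedUpToLoops M)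
    (hcirc : ∀ ⦃C⦄, M.IsCircuit C → C.ncard ≤ 1) : mrank M M.E ≤ 1 := by
  obtain ⟨B, hB⟩ := M.exists_isBase
  rw [mrank_eq_ncard_of_isBasis hB.isBasis_ground, ncard_le_one hB.finite]
  intro x hx y hy
  by_contra hxy
  obtain ⟨Z, hZ, hxZ, hyZ⟩ :=
    hM (hB.indep.isNonloop_of_mem hx) (hB.indep.isNonloop_of_mem hy) hxy
  exact hxy ((ncard_le_one hZ.finite).1 (hcirc hZ) x hxZ y hyZ)

lemma mrank_contract_ground_lt {C : Set α} (hC : M.IsCircuit C) (hC1 : 1 < C.ncard) :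
    mrank (M ／ C) (M ／ C).E < mrank M M.E := by
  obtain ⟨c, hc⟩ := hC.nonempty
  have hnonloop : M.IsNonloop c :=
    hC.isNonloop_of_mem (one_lt_ncard_iff_nontrivial_and_finite.1 hC1).1 hc
  rw [← mrank_contract_ground_add_mrank M C]
  exact Nat.lt_add_of_pos_right (mrank_pos_of_isNonloop hnonloop hc)

lemma hasDepthDecompOfDepthLE_sq (hℓ : 0 < ℓ) (hall : ∀ ⦃C⦄, M.IsCircuit C → C.ncard ≤ ℓ) :
    HasDepthDecompOfDepthLE M (ℓ ^ 2) := by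
  induction hr : mrank M M.E using Nat.strong_induction_on generalizing M ℓ with
  | _ r ih =>
    have hrestrict {R : Set α} (hR : R ⊆ M.E) (hlt : mrank M R < r) :
        HasDepthDecompOfDepthLE (M ↾ R) (ℓ ^ 2) :=
      ih _ hlt hℓ (fun _ hC ↦ hall ((Matroid.restrict_isCircuit_iff hR).1 hC).1)
        (mrank_restrict M subset_rfl)
    by_cases hM : ConnectedUpToLoops M
    swap
    · obtain ⟨S, hS, hpos, hpos'⟩ := exists_isSeparator_of_not_connectedUpToLoops hM
      have hsum := hS.mrank_add_mrank_compl
      exact .of_separator hS (hrestrict hS.1 (by omega)) (hrestrict sdiff_subset (by omega))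
    by_cases hex : ∃ C, M.IsCircuit C ∧ 1 < C.ncard
    swap
    · push Not at hex
      exact (HasDepthDecompOfDepthLE.mrank_ground M).mono
        ((hM.mrank_ground_le_one hex).trans (Nat.pow_pos hℓ))
    obtain ⟨D, hD, hD1⟩ := hex
    obtain ⟨C, hC, hmax⟩ := exists_isCircuit_forall_ncard_le ⟨D, hD⟩ hall
    have hC1 : 1 < C.ncard := hD1.trans_le (hmax hD)
    have hCℓ : C.ncard ≤ ℓ := hall hC
    have hcontract : HasDepthDecompOfDepthLE (M ／ C) ((ℓ - 1) ^ 2) :=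
      ih _ (hr ▸ mrank_contract_ground_lt hC hC1) (by omega)
        (fun _ hZ ↦ Nat.le_sub_one_of_lt
          ((hM.ncard_isCircuit_contract_lt hC hC1 hmax hZ).trans_le hCℓ)) rfl
    refine (hcontract.of_contract hC.finite).mono ?_
    obtain ⟨k, rfl⟩ : ∃ k, ℓ = k + 1 := ⟨ℓ - 1, by omega⟩
    calc (k + 1 - 1) ^ 2 + C.ncard ≤ k ^ 2 + (k + 1) := by simpa using hCℓ
      _ ≤ (k + 1) ^ 2 := by nlinarith

end LargestCircuit

theorem branchDepth_le_sq_of_circuits_small_general {α : Type} (M : Matroid α) [M.RankFinite]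
    (ℓ : ℕ) (hℓ : 0 < ℓ) (hall : ∀ C : Set α, IsCircuitOf M C → C.ncard ≤ ℓ) :
    HasDepthDecompOfDepthLE M (ℓ ^ 2) ∧ branchDepth M ≤ ℓ ^ 2 := by
  have hdecomp := hasDepthDecompOfDepthLE_sq hℓ fun C hC ↦ hall C (isCircuitOf_iff.2 hC)
  exact ⟨hdecomp, Nat.sInf_le hdecomp⟩

end BranchDepth

/-- If a finite matroid `M` has at least one circuit and every circuit
of `M` has size at most `ℓ`, then `M` has a depth-decomposition of depth at most `ℓ²`;
that is, the branch-depth of `M` is at most `ℓ²`. -/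
theorem branchDepth_le_sq_of_circuits_small {α : Type} (M : Matroid α) [M.Finite]
    (ℓ : ℕ) (hex : ∃ C : Set α, IsCircuitOf M C)
    (hall : ∀ C : Set α, IsCircuitOf M C → C.ncard ≤ ℓ) :
    HasDepthDecompOfDepthLE M (ℓ ^ 2) ∧ branchDepth M ≤ ℓ ^ 2 := by
  obtain ⟨C, hC⟩ := hex
  have hCcirc : M.IsCircuit C := isCircuitOf_iff.1 hC
  exact branchDepth_le_sq_of_circuits_small_general M ℓ
    (((Set.ncard_pos hCcirc.finite).2 hCcirc.nonempty).trans_le (hall C hC)) hall
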